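/- Let N ≥ 2 and 1 < p < N. For every u ∈ C_0^∞(ℝ^N): ∫_{ℝ^N} |u(x)|^p / |x|^p dx ≤ (p/(N-p))^p ∫_{ℝ^N} |∇u(x)|^p dx. -/

import Mathlib

open MeasureTheory

lemma hardy_kernel (c : ℝ) (hc : 1 < c) :
    ∫⁻ t in Set.Ioi (1:ℝ), ENNReal.ofReal (t ^ (-c)) = ENNReal.ofReal (1 / (c - 1)) := by
  rw [← ofReal_integral_eq_lintegral_ofReal]
  · rw [integral_Ioi_rpow_of_lt (by linarith) one_pos, Real.one_rpow]
    congr 1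
    rw [show -c + 1 = -(c - 1) by ring, neg_div_neg_eq]
  · exact integrableOn_Ioi_rpow_of_lt (by linarith) one_pos
  · filter_upwards [ae_restrict_mem measurableSet_Ioi] with t ht
    have : (0:ℝ) < t := lt_trans one_pos ht
    simp only [Pi.zero_apply]
    positivity

lemma hardy_holder (p c : ℝ) (hp1 : 1 < p) (hc : 1 < c) (g : ℝ → ENNReal) (hg : Measurable g) :
    (∫⁻ t in Set.Ioi (1:ℝ), g t) ^ p ≤ ENNReal.ofReal (1 / (c - 1)) ^ (p - 1) *
      ∫⁻ t in Set.Ioi (1:ℝ), ENNReal.ofReal (t ^ (c * (p - 1))) * g t ^ p := by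
  have hpq := Real.HolderConjugate.conjExponent hp1
  set q := p.conjExponent with hq
  have hp0 : 0 < p := by linarith
  have hqv : q = p / (p - 1) := rfl
  have hp1' : p - 1 ≠ 0 := by linarith
  have hq0 : 0 < q := hpq.symm.pos
  have hm : ∀ a : ℝ, Measurable (fun t : ℝ => ENNReal.ofReal (t ^ a)) := fun a => by fun_prop
  have h1 : ∫⁻ t in Set.Ioi (1:ℝ), g t ≤
      (∫⁻ t in Set.Ioi (1:ℝ), (ENNReal.ofReal (t ^ (c / q)) * g t) ^ p) ^ (1 / p) *
      (∫⁻ t in Set.Ioi (1:ℝ), (ENNReal.ofReal (t ^ (-c / q))) ^ q) ^ (1 / q) := by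
    refine le_trans (le_of_eq ?_) (ENNReal.lintegral_mul_le_Lp_mul_Lq (volume.restrict (Set.Ioi (1:ℝ))) hpq
      ((hm _).mul hg).aemeasurable (hm _).aemeasurable)
    refine setLIntegral_congr_fun measurableSet_Ioi fun t ht => ?_
    have ht0 : (0:ℝ) < t := lt_trans one_pos ht
    simp only [Pi.mul_apply]
    rw [mul_right_comm, ← ENNReal.ofReal_mul (by positivity), ← Real.rpow_add ht0]
    simp [neg_div]
  have h2 : ∫⁻ t in Set.Ioi (1:ℝ), (ENNReal.ofReal (t ^ (-c / q))) ^ q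
      = ENNReal.ofReal (1 / (c - 1)) := by
    rw [← hardy_kernel c hc]
    refine setLIntegral_congr_fun measurableSet_Ioi fun t ht => ?_
    have ht0 : (0:ℝ) < t := lt_trans one_pos ht
    rw [ENNReal.ofReal_rpow_of_nonneg (by positivity) hq0.le, ← Real.rpow_mul ht0.le,
      div_mul_cancel₀ _ hq0.ne']
  have h3 : ∫⁻ t in Set.Ioi (1:ℝ), (ENNReal.ofReal (t ^ (c / q)) * g t) ^ p
      = ∫⁻ t in Set.Ioi (1:ℝ), ENNReal.ofReal (t ^ (c * (p - 1))) * g t ^ p := by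
    refine setLIntegral_congr_fun measurableSet_Ioi fun t ht => ?_
    have ht0 : (0:ℝ) < t := lt_trans one_pos ht
    rw [ENNReal.mul_rpow_of_nonneg _ _ hp0.le,
      ENNReal.ofReal_rpow_of_nonneg (by positivity) hp0.le, ← Real.rpow_mul ht0.le]
    congr 3
    rw [hqv]; field_simp
  rw [h2, h3] at h1
  refine (ENNReal.rpow_le_rpow h1 hp0.le).trans (le_of_eq ?_)
  rw [ENNReal.mul_rpow_of_nonneg _ _ hp0.le, ← ENNReal.rpow_mul, ← ENNReal.rpow_mul,
    one_div_mul_cancel hp0.ne', ENNReal.rpow_one, mul_comm]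
  congr 2
  rw [hqv]; field_simp

lemma hardy_scale {N : ℕ} (G : EuclideanSpace ℝ (Fin N) → ENNReal) (hG : Measurable G)
    (t : ℝ) (ht : 0 < t) :
    ∫⁻ x, G (t • x) = ENNReal.ofReal (t ^ (-(N:ℝ))) * ∫⁻ x, G x := by
  rw [← lintegral_map (f := G) (g := fun x => t • x) hG (by fun_prop),
    Measure.map_addHaar_smul _ ht.ne', lintegral_smul_measure, finrank_euclideanSpace_fin,
    smul_eq_mul, abs_of_nonneg (by positivity), Real.rpow_neg ht.le, Real.rpow_natCast]

lemma hardy_ftc {N : ℕ} (u : EuclideanSpace ℝ (Fin N) → ℝ) (husm : ContDiff ℝ 1 u)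
    (husupp : HasCompactSupport u) (x : EuclideanSpace ℝ (Fin N)) (hx : x ≠ 0) :
    ‖u x‖ₑ ≤ ‖x‖ₑ * ∫⁻ t in Set.Ioi (1:ℝ), ‖fderiv ℝ u (t • x)‖ₑ := by
  have hf : ContDiff ℝ 1 (fun t : ℝ => u (t • x)) := husm.comp (by fun_prop)
  have hs : HasCompactSupport (fun t : ℝ => u (t • x)) :=
    husupp.comp_isClosedEmbedding (isClosedEmbedding_smul_left hx)
  have h := HasCompactSupport.integral_Ioi_deriv_eq hf hs 1
  have h2 : ‖u x‖ₑ = ‖∫ t in Set.Ioi (1:ℝ), deriv (fun t : ℝ => u (t • x)) t‖ₑ := by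
    rw [h]; simp
  rw [h2, ← lintegral_const_mul' _ _ (by simp)]
  refine (enorm_integral_le_lintegral_enorm _).trans (lintegral_mono fun t => ?_)
  have hd : HasDerivAt (fun t : ℝ => u (t • x)) (fderiv ℝ u (t • x) x) t := by
    have h1 : HasDerivAt (fun t : ℝ => t • x) x t := by
      simpa using (hasDerivAt_id t).smul_const x
    exact ((husm.differentiable (by norm_num)) (t • x)).hasFDerivAt.comp_hasDerivAt t h1
  rw [hd.deriv, mul_comm]
  exact ContinuousLinearMap.le_opENorm _ _

theorem classical_hardy_inequality (N : ℕ) (hN : 2 ≤ N)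
    (p : ℝ) (hp1 : 1 < p) (hpN : p < N)
    (u : EuclideanSpace ℝ (Fin N) → ℝ) (husm : ContDiff ℝ (⊤ : ℕ∞) u)
    (husupp : HasCompactSupport u) :
    ∫ x, |u x| ^ p / ‖x‖ ^ p ≤ (p / (N - p)) ^ p * ∫ x, ‖fderiv ℝ u x‖ ^ p := by
  have hu1 : ContDiff ℝ 1 u := husm.of_le (by exact_mod_cast le_top)
  have hp0 : 0 < p := by linarith
  have hcont : Continuous (fderiv ℝ u) := hu1.continuous_fderiv (by norm_num)
  have hNp : 0 < (N:ℝ) - p := by linarith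
  set c : ℝ := N / p with hcdef
  have hc : 1 < c := by rw [hcdef, lt_div_iff₀ hp0]; linarith
  have hcp : 1 / (c - 1) = p / (N - p) := by rw [hcdef]; field_simp
  set C := ENNReal.ofReal (1 / (c - 1)) with hC
  have hcm : Measurable (fun x => ‖fderiv ℝ u x‖ₑ ^ p) := by
    have := hcont.measurable
    fun_prop
  have hpt : ∀ x, ENNReal.ofReal (|u x| ^ p / ‖x‖ ^ p) ≤ C ^ (p - 1) *
      ∫⁻ t in Set.Ioi (1:ℝ), ENNReal.ofReal (t ^ (c * (p - 1))) * ‖fderiv ℝ u (t • x)‖ₑ ^ p := by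
    intro x
    by_cases hx : x = 0
    · simp [hx, Real.zero_rpow hp0.ne']
    have hxn : 0 < ‖x‖ := norm_pos_iff.2 hx
    refine le_trans ?_ (hardy_holder p c hp1 hc (fun t => ‖fderiv ℝ u (t • x)‖ₑ)
      (by have : Continuous fun t : ℝ => fderiv ℝ u (t • x) := hcont.comp (by fun_prop)
          exact this.enorm.measurable))
    rw [← Real.div_rpow (abs_nonneg _) (norm_nonneg _),
      ← ENNReal.ofReal_rpow_of_nonneg (by positivity) hp0.le]
    refine ENNReal.rpow_le_rpow ?_ hp0.le
    rw [ENNReal.ofReal_div_of_pos hxn, ← Real.norm_eq_abs, ofReal_norm, ofReal_norm]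
    exact ENNReal.div_le_of_le_mul' (hardy_ftc u hu1 husupp x hx)
  have hmain : ∫⁻ x, ENNReal.ofReal (|u x| ^ p / ‖x‖ ^ p) ≤ C ^ p * ∫⁻ x, ‖fderiv ℝ u x‖ₑ ^ p := by
    refine (lintegral_mono hpt).trans (le_of_eq ?_)
    rw [lintegral_const_mul' _ _ (by simp [hC, hp1.le]), lintegral_lintegral_swap]
    · have : ∫⁻ t in Set.Ioi (1:ℝ), ∫⁻ x, ENNReal.ofReal (t ^ (c * (p - 1))) *
          ‖fderiv ℝ u (t • x)‖ₑ ^ p = ∫⁻ t in Set.Ioi (1:ℝ), ENNReal.ofReal (t ^ (-c)) *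
            ∫⁻ x, ‖fderiv ℝ u x‖ₑ ^ p := by
        refine setLIntegral_congr_fun measurableSet_Ioi fun t ht => ?_
        have ht0 : (0:ℝ) < t := lt_trans one_pos ht
        rw [lintegral_const_mul' _ _ (by simp),
          hardy_scale (fun x => ‖fderiv ℝ u x‖ₑ ^ p) hcm t ht0, ← mul_assoc,
          ← ENNReal.ofReal_mul (by positivity), ← Real.rpow_add ht0]
        congr 3
        rw [hcdef]; field_simp; ring
      rw [this, lintegral_mul_const _ (by fun_prop), hardy_kernel c hc, ← hC, ← mul_assoc]
      congr 1
      have hC0 : C ≠ 0 := by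
        simp only [hC, ne_eq, ENNReal.ofReal_eq_zero, not_le]
        rw [hcp]; positivity
      nth_rw 2 [← ENNReal.rpow_one C]
      rw [← ENNReal.rpow_add _ _ hC0 (by simp [hC])]
      simp
    · have h1 : Continuous fun z : EuclideanSpace ℝ (Fin N) × ℝ => fderiv ℝ u (z.2 • z.1) :=
        hcont.comp (by fun_prop)
      have h2 := h1.enorm.measurable
      refine Measurable.aemeasurable ?_
      simp only [Function.uncurry_def]
      fun_prop
  have hI : Integrable (fun x => ‖fderiv ℝ u x‖ ^ p) := by
    refine Continuous.integrable_of_hasCompactSupport ?_ ?_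
    · exact hcont.norm.rpow_const (fun _ => Or.inr hp0.le)
    · exact (husupp.fderiv (𝕜 := ℝ)).comp_left (g := fun y => ‖y‖ ^ p)
        (by simp [Real.zero_rpow hp0.ne'])
  have hR : ∫⁻ x, ‖fderiv ℝ u x‖ₑ ^ p = ENNReal.ofReal (∫ x, ‖fderiv ℝ u x‖ ^ p) := by
    rw [ofReal_integral_eq_lintegral_ofReal hI (Filter.Eventually.of_forall fun x => by
      simp only [Pi.zero_apply]; positivity)]
    refine lintegral_congr fun x => ?_
    rw [← ENNReal.ofReal_rpow_of_nonneg (norm_nonneg _) hp0.le, ofReal_norm]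
  have hm : Measurable (fun x => |u x| ^ p / ‖x‖ ^ p) := by
    have := hu1.continuous.measurable
    have h3 : Measurable fun x => |u x| := hu1.continuous.abs.measurable
    fun_prop
  have hI0 : 0 ≤ ∫ x, ‖fderiv ℝ u x‖ ^ p := integral_nonneg fun x => by positivity
  rw [integral_eq_lintegral_of_nonneg_ae (Filter.Eventually.of_forall fun x => by
      simp only [Pi.zero_apply]; positivity) hm.aestronglyMeasurable]
  refine ENNReal.toReal_le_of_le_ofReal (by positivity) (hmain.trans (le_of_eq ?_))
  rw [hR, hC, hcp, ENNReal.ofReal_mul (by positivity),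
    ENNReal.ofReal_rpow_of_nonneg (by positivity) hp0.le]
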